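/- There is an absolute constant C > 0 with the following property: for all integers n > k ≥ 1, every log-concave upper semicontinuous probability density f : ℝⁿ → [0,∞) in isotropic position, and every k-dimensional linear subspace H ⊆ ℝⁿ, one has ∫_H f dλ_H ≥ C^{n−k}. -/

import Mathlib

open MeasureTheory

noncomputable section

/-- `ℝⁿ` with its Euclidean structure. -/
abbrev Eucl (n : ℕ) := EuclideanSpace ℝ (Fin n)

/-- `f : ℝⁿ → [0,∞)` is log-concave:
`f(tx+(1−t)y) ≥ f(x)^t · f(y)^(1−t)` for all `x, y` and `t ∈ (0,1)`. -/
def IsLogConcave {n : ℕ} (f : Eucl n → ℝ) : Prop :=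
  ∀ x y : Eucl n, ∀ t : ℝ, 0 < t → t < 1 →
    f x ^ t * f y ^ (1 - t) ≤ f (t • x + (1 - t) • y)

/-- The class `Q₀ⁿ`: nonnegative, log-concave, upper semicontinuous, integrable
functions with positive integral. -/
def MemQ0 {n : ℕ} (f : Eucl n → ℝ) : Prop :=
  (∀ x, 0 ≤ f x) ∧ IsLogConcave f ∧ UpperSemicontinuous f ∧
    Integrable f ∧ 0 < ∫ x, f x

/-- `‖f‖_∞ = sup f`. -/
def supNorm {n : ℕ} (f : Eucl n → ℝ) : ℝ := ⨆ x, f x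

/-- `‖f‖_p = (∫ f^p)^(1/p)`. -/
def lpNorm {n : ℕ} (p : ℝ) (f : Eucl n → ℝ) : ℝ := (∫ x, f x ^ p) ^ (1 / p)

/-- `‖P_H f‖_{L¹(H)} = ∫_H sup_{z ∈ H⊥} f(y+z) dλ_H(y)`, the `L¹(H)`-norm of the
projection of `f` onto the subspace `H` (with the Lebesgue measure on `H` induced
by the Euclidean structure). -/
def projL1 {n : ℕ} (f : Eucl n → ℝ) (H : Submodule ℝ (Eucl n)) : ℝ :=
  ∫ y : H, ⨆ z : Hᗮ, f ((y : Eucl n) + (z : Eucl n))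

/-- `‖S_H f‖_{L¹(H)} = ∫_H f dλ_H`, the integral of the section `f|_H`. -/
def sectL1 {n : ℕ} (f : Eucl n → ℝ) (H : Submodule ℝ (Eucl n)) : ℝ :=
  ∫ y : H, f (y : Eucl n)

/-!
Regard `f` as a probability density on `Hᗮ × H`. By the Prékopa–Leindler inequality its marginal
`g` on `Hᗮ` is log-concave; `g` is a probability density with barycentre `0`, and `g 0 = ∫_H f`.
The barycentre lies in the interior of the convex support of `g`, so `log g` has a supergradient
there, and integrating the supergradient inequality against `g` gives `∫ g log g ≤ log (g 0)`.
Gibbs' inequality against the Gaussian density `y ↦ exp (-π ‖y‖²)` gives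
`∫ g log g ≥ -π ∫ ‖y‖² g(y) dy = -π (n - k)`, the last step because `g` inherits the identity
covariance of `f`. Hence `C = exp (-π)` works.
-/

open Set ProbabilityTheory
open scoped ENNReal Pointwise

section BrunnMinkowski

variable {A B : Set ℝ}

lemma volume_add_volume_le_volume_add_of_isCompact (hA : IsCompact A) (hB : IsCompact B)
    (hA_ne : A.Nonempty) (hB_ne : B.Nonempty) : volume A + volume B ≤ volume (A + B) := by
  obtain ⟨a, haA, ha_max⟩ := hA.exists_isGreatest hA_ne
  obtain ⟨b, hbB, hb_min⟩ := hB.exists_isLeast hB_ne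
  have h_inter : (b +ᵥ A) ∩ (a +ᵥ B) ⊆ {a + b} := by
    rintro _ ⟨⟨x, hx, rfl⟩, y, hy, hxy⟩
    have hxa := ha_max hx
    have hby := hb_min hy
    simp only [vadd_eq_add, mem_singleton_iff] at hxy ⊢
    linarith
  have h_union : (b +ᵥ A) ∪ (a +ᵥ B) ⊆ A + B := by
    rintro _ (⟨x, hx, rfl⟩ | ⟨y, hy, rfl⟩)
    · exact ⟨x, hx, b, hbB, add_comm x b⟩
    · exact ⟨a, haA, y, hy, rfl⟩
  calc volume A + volume B = volume (b +ᵥ A) + volume (a +ᵥ B) := by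
        simp only [measure_vadd]
    _ = volume ((b +ᵥ A) ∪ (a +ᵥ B)) :=
        (measure_union₀ (hB.vadd a).measurableSet.nullMeasurableSet
          (measure_mono_null h_inter Real.volume_singleton)).symm
    _ ≤ volume (A + B) := measure_mono h_union

lemma volume_add_volume_le_volume_add (hA : MeasurableSet A) (hB : MeasurableSet B)
    (hA_ne : A.Nonempty) (hB_ne : B.Nonempty) : volume A + volume B ≤ volume (A + B) := by
  obtain ⟨a, ha⟩ := hA_ne
  obtain ⟨b, hb⟩ := hB_ne
  have h_compact (K L : Set ℝ) (hKA : K ⊆ A) (hLB : L ⊆ B) (hK : IsCompact K)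
      (hL : IsCompact L) : volume K + volume L ≤ volume (A + B) :=
    calc volume K + volume L ≤ volume (insert a K) + volume (insert b L) := by
          gcongr <;> exact subset_insert _ _
      _ ≤ volume (insert a K + insert b L) :=
          volume_add_volume_le_volume_add_of_isCompact (hK.insert a) (hL.insert b)
            (insert_nonempty _ _) (insert_nonempty _ _)
      _ ≤ volume (A + B) :=
          measure_mono (add_subset_add (insert_subset ha hKA) (insert_subset hb hLB))
  rw [hA.measure_eq_iSup_isCompact, hB.measure_eq_iSup_isCompact]
  simp only [iSup_and']
  exact ENNReal.biSup_add_biSup_le' ⟨∅, empty_subset A, isCompact_empty⟩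
    ⟨∅, empty_subset B, isCompact_empty⟩ fun K hK L hL ↦ h_compact K L hK.1 hL.1 hK.2 hL.2

end BrunnMinkowski

section LayerCake

lemma volume_Ioi_inter_setOf_ofReal_lt (c : ℝ≥0∞) :
    volume (Ioi (0 : ℝ) ∩ {s | ENNReal.ofReal s < c}) = c := by
  induction c with
  | top => simp
  | coe c =>
    have h_Ioo : Ioi (0 : ℝ) ∩ {s | ENNReal.ofReal s < c} = Ioo 0 (c : ℝ) := by
      ext s
      simp only [mem_inter_iff, mem_Ioi, mem_ofPred_eq, mem_Ioo, and_congr_right_iff]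
      intro hs
      rw [ENNReal.ofReal_lt_coe_iff hs.le]
    rw [h_Ioo, Real.volume_Ioo, sub_zero, ENNReal.ofReal_coe_nnreal]

lemma lintegral_eq_lintegral_measure_ofReal_lt {α : Type*} [MeasurableSpace α] {μ : Measure α}
    [SFinite μ] {f : α → ℝ≥0∞} (hf : Measurable f) :
    ∫⁻ x, f x ∂μ = ∫⁻ s in Ioi (0 : ℝ), μ {x | ENNReal.ofReal s < f x} := by
  have h_meas : MeasurableSet {p : α × ℝ | ENNReal.ofReal p.2 < f p.1} :=
    measurableSet_lt (by fun_prop) (by fun_prop)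
  calc ∫⁻ x, f x ∂μ
      = ∫⁻ x, (volume.restrict (Ioi (0 : ℝ))) {s | ENNReal.ofReal s < f x} ∂μ := by
        refine lintegral_congr fun x ↦ ?_
        rw [Measure.restrict_apply (measurableSet_lt (by fun_prop) measurable_const), inter_comm,
          volume_Ioi_inter_setOf_ofReal_lt]
    _ = (μ.prod (volume.restrict (Ioi (0 : ℝ)))) {p | ENNReal.ofReal p.2 < f p.1} :=
        (Measure.prod_apply h_meas).symm
    _ = ∫⁻ s in Ioi (0 : ℝ), μ {x | ENNReal.ofReal s < f x} := Measure.prod_apply_symm h_meas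

end LayerCake

section PrekopaLeindlerReal

variable {a b : ℝ} {f g h : ℝ → ℝ≥0∞}

lemma geom_mean_le_arith_mean2_weighted_ennreal (ha : 0 < a) (hb : 0 < b) (hab : a + b = 1)
    (x y : ℝ≥0∞) :
    x ^ a * y ^ b ≤ ENNReal.ofReal a * x + ENNReal.ofReal b * y := by
  have h_young := ENNReal.young_inequality (x ^ a) (y ^ b)
    (Real.HolderConjugate.inv_inv ha hb hab)
  simpa only [ENNReal.rpow_rpow_inv ha.ne', ENNReal.rpow_rpow_inv hb.ne', div_eq_mul_inv,
    ENNReal.ofReal_inv_of_pos ha, ENNReal.ofReal_inv_of_pos hb, inv_inv, mul_comm] using h_young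

lemma volume_superlevel_add_le (ha : 0 < a) (hb : 0 < b) (hab : a + b = 1) (hf : Measurable f)
    (hg : Measurable g) (hfgh : ∀ x y, f x ^ a * g y ^ b ≤ h (a • x + b • y)) {s : ℝ≥0∞}
    (hf_ne : {x | s < f x}.Nonempty) (hg_ne : {x | s < g x}.Nonempty) :
    ENNReal.ofReal a * volume {x | s < f x} + ENNReal.ofReal b * volume {x | s < g x} ≤
      volume {x | s < h x} := by
  have h_scale (c : ℝ) (hc : 0 < c) (A : Set ℝ) :
      ENNReal.ofReal c * volume A = volume (c • A) := by
    rw [Measure.addHaar_smul, Module.finrank_self, pow_one, abs_of_pos hc]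
  have h_subset : a • {x | s < f x} + b • {x | s < g x} ⊆ {x | s < h x} := by
    rintro _ ⟨_, ⟨x, hx, rfl⟩, _, ⟨y, hy, rfl⟩, rfl⟩
    calc s = s ^ a * s ^ b := by
          rw [← ENNReal.rpow_add_of_nonneg _ _ ha.le hb.le, hab, ENNReal.rpow_one]
      _ < f x ^ a * g y ^ b :=
          ENNReal.mul_lt_mul (ENNReal.rpow_lt_rpow hx ha) (ENNReal.rpow_lt_rpow hy hb)
      _ ≤ h (a • x + b • y) := hfgh x y
  rw [h_scale a ha, h_scale b hb]
  exact (volume_add_volume_le_volume_add ((measurableSet_lt measurable_const hf).const_smul₀ a)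
    ((measurableSet_lt measurable_const hg).const_smul₀ b) hf_ne.smul_set hg_ne.smul_set).trans
    (measure_mono h_subset)

lemma lintegral_add_le_of_iSup_eq_one (ha : 0 < a) (hb : 0 < b) (hab : a + b = 1)
    (hf : Measurable f) (hg : Measurable g) (hh : Measurable h)
    (hfgh : ∀ x y, f x ^ a * g y ^ b ≤ h (a • x + b • y))
    (hf_sup : ⨆ x, f x = 1) (hg_sup : ⨆ x, g x = 1) :
    ENNReal.ofReal a * (∫⁻ x, f x) + ENNReal.ofReal b * (∫⁻ x, g x) ≤ ∫⁻ x, h x := by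
  have h_meas (u : ℝ → ℝ≥0∞) : Measurable fun s : ℝ ↦ volume {x | ENNReal.ofReal s < u x} :=
    Antitone.measurable fun s t hst ↦ measure_mono fun x hx ↦
      (ENNReal.ofReal_le_ofReal hst).trans_lt hx
  rw [lintegral_eq_lintegral_measure_ofReal_lt hf, lintegral_eq_lintegral_measure_ofReal_lt hg,
    lintegral_eq_lintegral_measure_ofReal_lt hh, ← lintegral_const_mul _ (h_meas f),
    ← lintegral_const_mul _ (h_meas g), ← lintegral_add_left ((h_meas f).const_mul _)]
  refine lintegral_mono fun s ↦ ?_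
  rcases lt_or_ge (ENNReal.ofReal s) 1 with hs | hs
  · have h_ne (u : ℝ → ℝ≥0∞) (hu : ⨆ x, u x = 1) : {x | ENNReal.ofReal s < u x}.Nonempty := by
      obtain ⟨x, hx⟩ := lt_iSup_iff.1 (hs.trans_eq hu.symm)
      exact ⟨x, hx⟩
    exact volume_superlevel_add_le ha hb hab hf hg hfgh (h_ne f hf_sup) (h_ne g hg_sup)
  · have h_empty (u : ℝ → ℝ≥0∞) (hu : ⨆ x, u x = 1) : {x | ENNReal.ofReal s < u x} = ∅ :=
      eq_empty_of_forall_notMem fun x hx ↦ (hx.trans_le ((le_iSup u x).trans hu.le)).not_ge hs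
    simp only [h_empty f hf_sup, h_empty g hg_sup, measure_empty, mul_zero, add_zero, zero_le]

lemma prekopaLeindler_real_of_iSup_ne_top (ha : 0 < a) (hb : 0 < b) (hab : a + b = 1)
    (hf : Measurable f) (hg : Measurable g) (hh : Measurable h)
    (hfgh : ∀ x y, f x ^ a * g y ^ b ≤ h (a • x + b • y))
    (hf_sup : ⨆ x, f x ≠ ∞) (hg_sup : ⨆ x, g x ≠ ∞) :
    (∫⁻ x, f x) ^ a * (∫⁻ x, g x) ^ b ≤ ∫⁻ x, h x := by
  rcases eq_or_ne (⨆ x, f x) 0 with hf0 | hf0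
  · simp only [ENNReal.iSup_eq_zero.1 hf0, lintegral_zero, ENNReal.zero_rpow_of_pos ha, zero_mul,
      zero_le]
  rcases eq_or_ne (⨆ x, g x) 0 with hg0 | hg0
  · simp only [ENNReal.iSup_eq_zero.1 hg0, lintegral_zero, ENNReal.zero_rpow_of_pos hb, mul_zero,
      zero_le]
  set c := (⨆ x, f x)⁻¹ with hc
  set d := (⨆ x, g x)⁻¹ with hd
  have h_homog (x y : ℝ≥0∞) : (c * x) ^ a * (d * y) ^ b = c ^ a * d ^ b * (x ^ a * y ^ b) := by
    rw [ENNReal.mul_rpow_of_nonneg _ _ ha.le, ENNReal.mul_rpow_of_nonneg _ _ hb.le,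
      mul_mul_mul_comm]
  have h_const_ne_zero : c ^ a * d ^ b ≠ 0 := by
    simp [hc, hd, hf_sup, hg_sup, ha.not_gt, hb.not_gt]
  have h_const_ne_top : c ^ a * d ^ b ≠ ∞ :=
    ENNReal.mul_ne_top (ENNReal.rpow_ne_top_of_nonneg ha.le (ENNReal.inv_ne_top.2 hf0))
      (ENNReal.rpow_ne_top_of_nonneg hb.le (ENNReal.inv_ne_top.2 hg0))
  have h_normalized := lintegral_add_le_of_iSup_eq_one ha hb hab (hf.const_mul c)
    (hg.const_mul d) (hh.const_mul (c ^ a * d ^ b))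
    (fun x y ↦ by rw [h_homog]; gcongr; exact hfgh x y)
    (by rw [← ENNReal.mul_iSup, hc, ENNReal.inv_mul_cancel hf0 hf_sup])
    (by rw [← ENNReal.mul_iSup, hd, ENNReal.inv_mul_cancel hg0 hg_sup])
  rw [lintegral_const_mul c hf, lintegral_const_mul d hg, lintegral_const_mul _ hh] at h_normalized
  rw [← ENNReal.mul_le_mul_iff_right h_const_ne_zero h_const_ne_top, ← h_homog]
  exact (geom_mean_le_arith_mean2_weighted_ennreal ha hb hab _ _).trans h_normalized

lemma lintegral_eq_iSup_lintegral_min_natCast {α : Type*} [MeasurableSpace α] {μ : Measure α}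
    {f : α → ℝ≥0∞} (hf : Measurable f) :
    ∫⁻ x, f x ∂μ = ⨆ N : ℕ, ∫⁻ x, min (f x) N ∂μ := by
  rw [← lintegral_iSup (fun N ↦ hf.min measurable_const)
    fun M N hMN x ↦ min_le_min_left _ (Nat.cast_le.2 hMN)]
  refine lintegral_congr fun x ↦ ?_
  rw [← inf_iSup_eq, ENNReal.iSup_natCast, inf_top_eq]

theorem prekopaLeindler_real (ha : 0 < a) (hb : 0 < b) (hab : a + b = 1)
    (hf : Measurable f) (hg : Measurable g) (hh : Measurable h)
    (hfgh : ∀ x y, f x ^ a * g y ^ b ≤ h (a • x + b • y)) :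
    (∫⁻ x, f x) ^ a * (∫⁻ x, g x) ^ b ≤ ∫⁻ x, h x := by
  have h_bdd (u : ℝ → ℝ≥0∞) (N : ℕ) : ⨆ x, min (u x) (N : ℝ≥0∞) ≠ ∞ :=
    ne_top_of_le_ne_top (ENNReal.natCast_ne_top N) (iSup_le fun x ↦ min_le_right _ _)
  have h_trunc (N : ℕ) :
      (∫⁻ x, min (f x) N) ^ a * (∫⁻ x, min (g x) N) ^ b ≤ ∫⁻ x, h x :=
    prekopaLeindler_real_of_iSup_ne_top ha hb hab (hf.min measurable_const)
      (hg.min measurable_const) hh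
      (fun x y ↦ le_trans (by gcongr <;> exact min_le_left _ _) (hfgh x y)) (h_bdd f N) (h_bdd g N)
  have h_rpow_iSup {p : ℝ} (hp : 0 < p) (u : ℕ → ℝ≥0∞) : (⨆ N, u N) ^ p = ⨆ N, u N ^ p :=
    (ENNReal.orderIsoRpow p hp).map_iSup u
  rw [lintegral_eq_iSup_lintegral_min_natCast hf, lintegral_eq_iSup_lintegral_min_natCast hg,
    h_rpow_iSup ha, h_rpow_iSup hb, ENNReal.iSup_mul]
  simp only [ENNReal.mul_iSup]
  refine iSup₂_le fun M N ↦ le_trans ?_ (h_trunc (max M N))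
  gcongr <;> simp

end PrekopaLeindlerReal

section PrekopaLeindler

variable {E F : Type*} [AddCommGroup E] [Module ℝ E] [MeasurableSpace E]
  [AddCommGroup F] [Module ℝ F] [MeasurableSpace F]

/-- The measure `μ` satisfies the Prékopa–Leindler inequality, for `[0,∞]`-valued functions. As a
property of measures it passes to products, linear images and scalar multiples, which reduces
the inequality for Haar measures to the one for Lebesgue measure on `ℝ`. -/
def IsPrekopaLeindler (μ : Measure E) : Prop :=
  ∀ ⦃a b : ℝ⦄, 0 < a → 0 < b → a + b = 1 → ∀ ⦃f g h : E → ℝ≥0∞⦄,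
    Measurable f → Measurable g → Measurable h →
    (∀ x y, f x ^ a * g y ^ b ≤ h (a • x + b • y)) →
    (∫⁻ x, f x ∂μ) ^ a * (∫⁻ x, g x ∂μ) ^ b ≤ ∫⁻ x, h x ∂μ

namespace IsPrekopaLeindler

lemma volume_real : IsPrekopaLeindler (volume : Measure ℝ) :=
  fun _ _ ha hb hab _ _ _ hf hg hh hfgh ↦ prekopaLeindler_real ha hb hab hf hg hh hfgh

lemma dirac (z : E) : IsPrekopaLeindler (Measure.dirac z) := by
  intro a b _ _ hab f g h hf hg hh hfgh
  rw [lintegral_dirac' z hf, lintegral_dirac' z hg, lintegral_dirac' z hh]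
  simpa only [Convex.combo_self hab] using hfgh z z

lemma prod {μ : Measure E} {ν : Measure F} [SFinite ν] (hμ : IsPrekopaLeindler μ)
    (hν : IsPrekopaLeindler ν) : IsPrekopaLeindler (μ.prod ν) := by
  intro a b ha hb hab f g h hf hg hh hfgh
  rw [lintegral_prod _ hf.aemeasurable, lintegral_prod _ hg.aemeasurable,
    lintegral_prod _ hh.aemeasurable]
  exact hμ ha hb hab hf.lintegral_prod_right' hg.lintegral_prod_right' hh.lintegral_prod_right'
    fun x y ↦ hν ha hb hab (by fun_prop) (by fun_prop) (by fun_prop)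
      fun u v ↦ hfgh (x, u) (y, v)

lemma map {μ : Measure E} (hμ : IsPrekopaLeindler μ) (L : E →ₗ[ℝ] F) (hL : Measurable L) :
    IsPrekopaLeindler (μ.map L) := by
  intro a b ha hb hab f g h hf hg hh hfgh
  rw [lintegral_map hf hL, lintegral_map hg hL, lintegral_map hh hL]
  refine hμ ha hb hab (hf.comp hL) (hg.comp hL) (hh.comp hL) fun x y ↦ ?_
  simpa only [Function.comp_apply, map_add, map_smul] using hfgh (L x) (L y)

lemma smul {μ : Measure E} (hμ : IsPrekopaLeindler μ) {c : ℝ≥0∞} :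
    IsPrekopaLeindler (c • μ) := by
  intro a b ha hb hab f g h hf hg hh hfgh
  simp only [lintegral_smul_measure, smul_eq_mul]
  calc (c * ∫⁻ x, f x ∂μ) ^ a * (c * ∫⁻ x, g x ∂μ) ^ b
      = c ^ (a + b) * ((∫⁻ x, f x ∂μ) ^ a * (∫⁻ x, g x ∂μ) ^ b) := by
        rw [ENNReal.mul_rpow_of_nonneg _ _ ha.le, ENNReal.mul_rpow_of_nonneg _ _ hb.le,
          ENNReal.rpow_add_of_nonneg _ _ ha.le hb.le, mul_mul_mul_comm]
    _ ≤ c * ∫⁻ x, h x ∂μ := by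
        rw [hab, ENNReal.rpow_one]
        gcongr
        exact hμ ha hb hab hf hg hh hfgh

lemma volume_pi : ∀ n : ℕ, IsPrekopaLeindler (volume : Measure (Fin n → ℝ))
  | 0 => by
    rw [MeasureTheory.volume_pi, Measure.pi_of_empty]
    exact dirac _
  | n + 1 => by
    have h_prod := volume_real.prod (volume_pi n)
    let e : ℝ × (Fin n → ℝ) →ₗ[ℝ] (Fin (n + 1) → ℝ) :=
      (Fin.consLinearEquiv ℝ fun _ : Fin (n + 1) ↦ ℝ).toLinearMap
    have h_coe : ⇑e = (MeasurableEquiv.piFinSuccAbove (fun _ : Fin (n + 1) ↦ ℝ) 0).symm := by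
      funext p
      exact (Fin.insertNth_zero' p.1 p.2).symm
    have h_map : MeasurePreserving e :=
      h_coe ▸ (volume_preserving_piFinSuccAbove (fun _ : Fin (n + 1) ↦ ℝ) 0).symm
    rw [← h_map.map_eq]
    exact h_prod.map e h_map.measurable

end IsPrekopaLeindler

theorem isPrekopaLeindler_of_isAddHaarMeasure {V : Type*} [NormedAddCommGroup V]
    [NormedSpace ℝ V] [FiniteDimensional ℝ V] [MeasurableSpace V] [BorelSpace V]
    (μ : Measure V) [μ.IsAddHaarMeasure] : IsPrekopaLeindler μ := by
  let e : (Fin (Module.finrank ℝ V) → ℝ) ≃L[ℝ] V :=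
    ContinuousLinearEquiv.ofFinrankEq (Module.finrank_fin_fun ℝ)
  have h_map : IsPrekopaLeindler ((volume : Measure (Fin (Module.finrank ℝ V) → ℝ)).map e) :=
    (IsPrekopaLeindler.volume_pi _).map e.toLinearMap e.continuous.measurable
  have : ((volume : Measure (Fin (Module.finrank ℝ V) → ℝ)).map e).IsAddHaarMeasure :=
    e.isAddHaarMeasure_map volume
  rw [Measure.isAddLeftInvariant_eq_smul μ (volume.map e)]
  exact h_map.smul

end PrekopaLeindler

section LogConcave

/-- Log-concavity of a `[0,∞]`-valued function. Marginals are computed by lower integrals, so this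
form of the notion, unlike `IsLogConcave`, makes sense for them without any integrability. -/
def IsENNLogConcave {E : Type*} [AddCommGroup E] [Module ℝ E] (f : E → ℝ≥0∞) : Prop :=
  ∀ ⦃x y : E⦄ ⦃a b : ℝ⦄, 0 < a → 0 < b → a + b = 1 → f x ^ a * f y ^ b ≤ f (a • x + b • y)

lemma IsLogConcave.isENNLogConcave_ofReal {n : ℕ} {f : Eucl n → ℝ} (hf : IsLogConcave f)
    (hf_nonneg : ∀ x, 0 ≤ f x) : IsENNLogConcave fun x ↦ ENNReal.ofReal (f x) := by
  intro x y a b ha hb hab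
  obtain rfl : b = 1 - a := by linarith
  rw [ENNReal.ofReal_rpow_of_nonneg (hf_nonneg x) ha.le,
    ENNReal.ofReal_rpow_of_nonneg (hf_nonneg y) hb.le,
    ← ENNReal.ofReal_mul (Real.rpow_nonneg (hf_nonneg x) a)]
  exact ENNReal.ofReal_le_ofReal (hf x y a ha (by linarith))

namespace IsENNLogConcave

section Module

variable {E F : Type*} [AddCommGroup E] [Module ℝ E] [AddCommGroup F] [Module ℝ F]

lemma comp_linearMap {f : F → ℝ≥0∞} (hf : IsENNLogConcave f) (L : E →ₗ[ℝ] F) :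
    IsENNLogConcave (f ∘ L) := by
  intro x y a b ha hb hab
  simpa only [Function.comp_apply, map_add, map_smul] using hf (x := L x) (y := L y) ha hb hab

lemma lintegral_prod_right [MeasurableSpace E] [MeasurableSpace F] {ν : Measure F}
    (hν : IsPrekopaLeindler ν) {f : E × F → ℝ≥0∞} (hf : IsENNLogConcave f)
    (hf_meas : Measurable f) : IsENNLogConcave fun x ↦ ∫⁻ y, f (x, y) ∂ν :=
  fun x y _ _ ha hb hab ↦ hν ha hb hab (by fun_prop) (by fun_prop) (by fun_prop)
    fun u v ↦ hf (x := (x, u)) (y := (y, v)) ha hb hab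

lemma convex_support {f : E → ℝ≥0∞} (hf : IsENNLogConcave f) :
    Convex ℝ (Function.support f) := by
  refine convex_iff_forall_pos.2 fun x hx y hy a b ha hb hab h_zero ↦ ?_
  have h_le := (hf (x := x) (y := y) ha hb hab).trans h_zero.le
  rcases mul_eq_zero.1 (nonpos_iff_eq_zero.1 h_le) with h | h
  · exact hx ((ENNReal.rpow_eq_zero_iff_of_pos ha).1 h)
  · exact hy ((ENNReal.rpow_eq_zero_iff_of_pos hb).1 h)

lemma concaveOn_log_toReal {f : E → ℝ≥0∞} (hf : IsENNLogConcave f) (hf_top : ∀ x, f x ≠ ∞) :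
    ConcaveOn ℝ (Function.support f) fun x ↦ Real.log (f x).toReal := by
  refine concaveOn_iff_forall_pos.2 ⟨hf.convex_support, fun x hx y hy a b ha hb hab ↦ ?_⟩
  have hx_pos : 0 < (f x).toReal := ENNReal.toReal_pos hx (hf_top x)
  have hy_pos : 0 < (f y).toReal := ENNReal.toReal_pos hy (hf_top y)
  have h_le : (f x).toReal ^ a * (f y).toReal ^ b ≤ (f (a • x + b • y)).toReal := by
    rw [ENNReal.toReal_rpow, ENNReal.toReal_rpow, ← ENNReal.toReal_mul]
    exact ENNReal.toReal_mono (hf_top _) (hf ha hb hab)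
  calc a • Real.log (f x).toReal + b • Real.log (f y).toReal
      = Real.log ((f x).toReal ^ a * (f y).toReal ^ b) := by
        rw [Real.log_mul (by positivity) (by positivity), Real.log_rpow hx_pos,
          Real.log_rpow hy_pos, smul_eq_mul, smul_eq_mul]
    _ ≤ Real.log (f (a • x + b • y)).toReal := Real.log_le_log (by positivity) h_le

end Module

lemma ne_top_of_lintegral_ne_top {V : Type*} [NormedAddCommGroup V] [NormedSpace ℝ V]
    [FiniteDimensional ℝ V] [MeasurableSpace V] [BorelSpace V] {μ : Measure V}
    [μ.IsAddHaarMeasure] {f : V → ℝ≥0∞} (hf : IsENNLogConcave f) (hf_meas : Measurable f)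
    (hf_zero : ∫⁻ x, f x ∂μ ≠ 0) (hf_top : ∫⁻ x, f x ∂μ ≠ ∞) (x : V) : f x ≠ ∞ := by
  intro hx
  have h_support : μ (Function.support f) ≠ 0 := by
    rwa [← pos_iff_ne_zero, ← lintegral_pos_iff_support hf_meas, pos_iff_ne_zero]
  have h_image : AffineMap.homothety x (1 / 2 : ℝ) '' Function.support f ⊆ {z | f z = ∞} := by
    rintro _ ⟨y, hy, rfl⟩
    have h_mid := hf (x := x) (y := y) one_half_pos one_half_pos (add_halves (1 : ℝ))
    have hy_rpow : f y ^ (1 / 2 : ℝ) ≠ 0 :=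
      (ENNReal.rpow_pos_of_nonneg (pos_iff_ne_zero.2 hy) one_half_pos.le).ne'
    rw [hx, ENNReal.top_rpow_of_pos one_half_pos, ENNReal.top_mul hy_rpow, top_le_iff] at h_mid
    rw [mem_ofPred_eq, ← h_mid, AffineMap.homothety_apply, vsub_eq_sub, vadd_eq_add]
    congr 1
    module
  have h_null : μ {z | f z = ∞} = 0 :=
    measure_eq_top_of_lintegral_ne_top hf_meas.aemeasurable hf_top
  refine (measure_mono_null h_image h_null).not_gt ?_
  rw [Measure.addHaar_image_homothety]
  exact ENNReal.mul_pos (by positivity) h_support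

end IsENNLogConcave

end LogConcave

section Convex

variable {E : Type*} [NormedAddCommGroup E] [NormedSpace ℝ E]

lemma exists_supergradient {φ : E → ℝ} {s : Set E} (hφ : ConcaveOn ℝ s φ)
    (hφ_cont : ContinuousOn φ s) (hs : IsOpen s) {x : E} (hx : x ∈ s) :
    ∃ ℓ : E →L[ℝ] ℝ, ∀ y ∈ s, φ y ≤ φ x + ℓ (y - x) := by
  have h_open : IsOpen {p : E × ℝ | p.1 ∈ s ∧ p.2 < φ p.1} := by
    have h_cont : ContinuousOn (fun p : E × ℝ ↦ φ p.1 - p.2) (s ×ˢ univ) :=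
      (hφ_cont.comp continuousOn_fst fun p hp ↦ hp.1).sub continuousOn_snd
    convert h_cont.isOpen_inter_preimage (hs.prod isOpen_univ) (isOpen_Ioi (a := (0 : ℝ))) using 1
    ext p
    simp
  obtain ⟨L, hL⟩ := geometric_hahn_banach_open_point (x := (x, φ x)) hφ.convex_strict_hypograph
    h_open fun h ↦ h.2.false
  set c := L (0, 1) with hc
  have h_apply (y : E) (r : ℝ) : L (y, r) = L (y, 0) + r * c := by
    rw [hc, ← smul_eq_mul, ← map_smul, ← map_add, Prod.smul_mk, Prod.mk_add_mk, smul_zero,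
      add_zero, zero_add, smul_eq_mul, mul_one]
  have h_lt {y : E} (hy : y ∈ s) {r : ℝ} (hr : r < φ y) :
      L (y, 0) + r * c < L (x, 0) + φ x * c := by
    simpa only [← h_apply] using hL (y, r) ⟨hy, hr⟩
  have hc_pos : 0 < c := by linarith [h_lt hx (sub_one_lt (φ x))]
  refine ⟨-(c⁻¹ • L.comp (ContinuousLinearMap.inl ℝ E ℝ)), fun y hy ↦
    le_of_forall_lt fun r hr ↦ ?_⟩
  have h_slope : r < φ x - L (y - x, 0) / c := by
    have h_sub : L (y - x, 0) = L (y, 0) - L (x, 0) := by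
      rw [← map_sub, Prod.mk_sub_mk, sub_zero]
    rw [h_sub, lt_sub_iff_add_lt, ← lt_sub_iff_add_lt', div_lt_iff₀ hc_pos]
    linarith [h_lt hy hr]
  simpa [div_eq_inv_mul, sub_eq_add_neg] using h_slope

lemma integral_mem_of_convex_of_isOpen [CompleteSpace E] {α : Type*} [MeasurableSpace α]
    {μ : Measure α} [IsProbabilityMeasure μ] {s : Set E} (hs : Convex ℝ s) (hs_open : IsOpen s)
    {f : α → E} (hf_mem : ∀ᵐ x ∂μ, f x ∈ s) (hf : Integrable f μ) : ∫ x, f x ∂μ ∈ s := by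
  by_contra h_notMem
  obtain ⟨ℓ, hℓ⟩ := geometric_hahn_banach_open_point hs hs_open h_notMem
  have h_gap_pos : ∀ᵐ x ∂μ, 0 < ℓ (∫ z, f z ∂μ) - ℓ (f x) :=
    hf_mem.mono fun x hx ↦ sub_pos.2 (hℓ _ hx)
  have h_gap_int : Integrable (fun x ↦ ℓ (∫ z, f z ∂μ) - ℓ (f x)) μ :=
    (integrable_const _).sub (ℓ.integrable_comp hf)
  have h_gap_zero : ∫ x, (ℓ (∫ z, f z ∂μ) - ℓ (f x)) ∂μ = 0 := by
    rw [integral_sub (integrable_const _) (ℓ.integrable_comp hf), integral_const, probReal_univ,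
      one_smul, ℓ.integral_comp_comm hf, sub_self]
  have h_ae_zero := (integral_eq_zero_iff_of_nonneg_ae (h_gap_pos.mono fun x hx ↦ hx.le)
    h_gap_int).1 h_gap_zero
  obtain ⟨x, hx_pos, hx_zero⟩ := (h_gap_pos.and h_ae_zero).exists
  exact hx_pos.ne' hx_zero

lemma ae_mem_interior_of_convex [FiniteDimensional ℝ E] [MeasurableSpace E] [BorelSpace E]
    {μ ν : Measure E} [μ.IsAddHaarMeasure] (hνμ : ν ≪ μ) {s : Set E} (hs : Convex ℝ s)
    (h_mem : ∀ᵐ x ∂ν, x ∈ s) : ∀ᵐ x ∂ν, x ∈ interior s := by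
  have h_frontier : ∀ᵐ x ∂ν, x ∉ frontier s :=
    measure_eq_zero_iff_ae_notMem.1 (hνμ (hs.addHaar_frontier μ))
  filter_upwards [h_mem, h_frontier] with x hx hx_frontier
  by_contra hx_interior
  exact hx_frontier ⟨subset_closure hx, hx_interior⟩

end Convex

section Gibbs

variable {α : Type*} [MeasurableSpace α] {μ : Measure α} {g : α → ℝ≥0∞}

lemma lintegral_div_withDensity_le (hg : Measurable g) {p : α → ℝ≥0∞} (hp : Measurable p) :
    ∫⁻ x, p x / g x ∂(μ.withDensity g) ≤ ∫⁻ x, p x ∂μ := by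
  rw [lintegral_withDensity_eq_lintegral_mul _ hg (by fun_prop)]
  exact lintegral_mono fun x ↦ ENNReal.mul_div_le

lemma lintegral_eq_one_of_isProbabilityMeasure_withDensity
    [IsProbabilityMeasure (μ.withDensity g)] : ∫⁻ x, g x ∂μ = 1 := by
  rw [← setLIntegral_univ, ← withDensity_apply _ MeasurableSet.univ, measure_univ]

/- Gibbs' inequality `∫ log p ≤ ∫ log g`, stated for a majorant `u` of `log g` so that `log g`
need not be integrable. -/
lemma integral_log_le_of_log_density_le (hg : Measurable g)
    [IsProbabilityMeasure (μ.withDensity g)] {p u : α → ℝ} (hp_meas : Measurable p)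
    (hp_pos : ∀ x, 0 < p x) (hp : ∫⁻ x, ENNReal.ofReal (p x) ∂μ ≤ 1)
    (hp_log : Integrable (fun x ↦ Real.log (p x)) (μ.withDensity g))
    (hu : Integrable u (μ.withDensity g))
    (hgu : ∀ᵐ x ∂(μ.withDensity g), Real.log (g x).toReal ≤ u x) :
    ∫ x, Real.log (p x) ∂(μ.withDensity g) ≤ ∫ x, u x ∂(μ.withDensity g) := by
  set ν := μ.withDensity g
  set q : α → ℝ≥0∞ := fun x ↦ ENNReal.ofReal (p x) / g x with hq
  have hq_meas : Measurable q := by fun_prop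
  have hq_le : ∫⁻ x, q x ∂ν ≤ 1 := (lintegral_div_withDensity_le hg (by fun_prop)).trans hp
  have hq_ne_top := ne_top_of_le_ne_top ENNReal.one_ne_top hq_le
  have hq_int := integrable_toReal_of_lintegral_ne_top hq_meas.aemeasurable hq_ne_top
  have hq_integral_le : ∫ x, (q x).toReal ∂ν ≤ 1 := by
    rw [integral_toReal hq_meas.aemeasurable (ae_lt_top hq_meas hq_ne_top)]
    exact ENNReal.toReal_mono ENNReal.one_ne_top hq_le
  have hq_sub_int : Integrable (fun x ↦ (q x).toReal - 1) ν := hq_int.sub (integrable_const 1)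
  have hg_ne_zero : ∀ᵐ x ∂ν, g x ≠ 0 := (ae_withDensity_iff hg).2 (.of_forall fun _ ↦ id)
  have hg_lt_top : ∀ᵐ x ∂ν, g x < ∞ :=
    (withDensity_absolutelyContinuous μ g).ae_le <| ae_lt_top hg <|
      lintegral_eq_one_of_isProbabilityMeasure_withDensity.trans_ne ENNReal.one_ne_top
  have h_pointwise : ∀ᵐ x ∂ν, Real.log (p x) ≤ u x + ((q x).toReal - 1) := by
    filter_upwards [hg_ne_zero, hg_lt_top, hgu] with x hx_zero hx_top hx
    have hgx_pos : 0 < (g x).toReal := ENNReal.toReal_pos hx_zero hx_top.ne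
    have hqx : (q x).toReal = p x / (g x).toReal := by
      rw [hq, ENNReal.toReal_div, ENNReal.toReal_ofReal (hp_pos x).le]
    have h_log := Real.log_le_sub_one_of_pos (div_pos (hp_pos x) hgx_pos)
    rw [Real.log_div (hp_pos x).ne' hgx_pos.ne', ← hqx] at h_log
    linarith
  calc ∫ x, Real.log (p x) ∂ν ≤ ∫ x, (u x + ((q x).toReal - 1)) ∂ν :=
        integral_mono_ae hp_log (hu.add hq_sub_int) h_pointwise
    _ = ∫ x, u x ∂ν + (∫ x, (q x).toReal ∂ν - 1) := by
        rw [integral_add hu hq_sub_int, integral_sub hq_int (integrable_const 1), integral_const,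
          probReal_univ, one_smul]
    _ ≤ ∫ x, u x ∂ν := by linarith

end Gibbs

section Barycenter

namespace IsENNLogConcave

variable {V : Type*} [NormedAddCommGroup V] [NormedSpace ℝ V] [FiniteDimensional ℝ V]
  {g : V → ℝ≥0∞}

lemma exists_log_supergradient (hg : IsENNLogConcave g) (hg_top : ∀ x, g x ≠ ∞) {x : V}
    (hx : x ∈ interior (Function.support g)) :
    ∃ ℓ : V →L[ℝ] ℝ, ∀ y ∈ interior (Function.support g),
      Real.log (g y).toReal ≤ Real.log (g x).toReal + ℓ (y - x) := by
  have h_concave := (hg.concaveOn_log_toReal hg_top).subset interior_subset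
    hg.convex_support.interior
  exact exists_supergradient h_concave (h_concave.continuousOn isOpen_interior) isOpen_interior hx

variable [MeasurableSpace V] [BorelSpace V] {μ : Measure V} [μ.IsAddHaarMeasure]

lemma ae_mem_interior_support (hg : IsENNLogConcave g) (hg_meas : Measurable g) :
    ∀ᵐ y ∂(μ.withDensity g), y ∈ interior (Function.support g) :=
  ae_mem_interior_of_convex (withDensity_absolutelyContinuous μ g) hg.convex_support
    ((ae_withDensity_iff hg_meas).2 (.of_forall fun _ ↦ id))

lemma exp_integral_log_le (hg : IsENNLogConcave g) (hg_meas : Measurable g)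
    [IsProbabilityMeasure (μ.withDensity g)] (h_id : Integrable id (μ.withDensity g))
    {p : V → ℝ} (hp_meas : Measurable p) (hp_pos : ∀ y, 0 < p y)
    (hp : ∫⁻ y, ENNReal.ofReal (p y) ∂μ ≤ 1)
    (hp_log : Integrable (fun y ↦ Real.log (p y)) (μ.withDensity g)) :
    Real.exp (∫ y, Real.log (p y) ∂(μ.withDensity g)) ≤
      (g (∫ y, y ∂(μ.withDensity g))).toReal := by
  have hg_mass := lintegral_eq_one_of_isProbabilityMeasure_withDensity (μ := μ) (g := g)
  have hg_top := hg.ne_top_of_lintegral_ne_top hg_meas (hg_mass ▸ one_ne_zero)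
    (hg_mass ▸ ENNReal.one_ne_top)
  set ν := μ.withDensity g
  set c := ∫ y, y ∂ν with hc
  have h_interior : ∀ᵐ y ∂ν, y ∈ interior (Function.support g) :=
    hg.ae_mem_interior_support hg_meas
  have hc_mem : c ∈ interior (Function.support g) :=
    integral_mem_of_convex_of_isOpen hg.convex_support.interior isOpen_interior h_interior h_id
  obtain ⟨ℓ, hℓ⟩ := hg.exists_log_supergradient hg_top hc_mem
  have h_sub : Integrable (fun y ↦ y - c) ν := h_id.sub (integrable_const c)
  have hℓ_int : Integrable (fun y ↦ ℓ (y - c)) ν := ℓ.integrable_comp h_sub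
  have hℓ_zero : ∫ y, ℓ (y - c) ∂ν = 0 := by
    rw [ℓ.integral_comp_comm h_sub, integral_sub (f := fun y ↦ y) h_id (integrable_const c),
      integral_const, probReal_univ, one_smul, ← hc, sub_self, map_zero]
  rw [← Real.le_log_iff_exp_le (ENNReal.toReal_pos (interior_subset hc_mem) (hg_top c))]
  calc ∫ y, Real.log (p y) ∂ν ≤ ∫ y, (Real.log (g c).toReal + ℓ (y - c)) ∂ν :=
        integral_log_le_of_log_density_le hg_meas hp_meas hp_pos hp hp_log
          ((integrable_const _).add hℓ_int) (h_interior.mono hℓ)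
    _ = Real.log (g c).toReal := by
        rw [integral_add (integrable_const _) hℓ_int, hℓ_zero, integral_const, probReal_univ,
          one_smul, add_zero]

end IsENNLogConcave

lemma lintegral_ofReal_exp_neg_pi_mul_sq_norm {V : Type*} [NormedAddCommGroup V]
    [InnerProductSpace ℝ V] [FiniteDimensional ℝ V] [MeasurableSpace V] [BorelSpace V] :
    ∫⁻ y : V, ENNReal.ofReal (Real.exp (-Real.pi * ‖y‖ ^ 2)) = 1 := by
  have h_integral := GaussianFourier.integral_rexp_neg_mul_sq_norm (V := V) Real.pi_pos
  rw [div_self Real.pi_ne_zero, Real.one_rpow] at h_integral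
  rw [← ofReal_integral_eq_lintegral_ofReal (.of_integral_ne_zero (h_integral ▸ one_ne_zero))
    (.of_forall fun y ↦ (Real.exp_pos _).le), h_integral, ENNReal.ofReal_one]

lemma IsENNLogConcave.exp_neg_pi_mul_integral_sq_norm_le {V : Type*} [NormedAddCommGroup V]
    [InnerProductSpace ℝ V] [FiniteDimensional ℝ V] [MeasurableSpace V] [BorelSpace V]
    {g : V → ℝ≥0∞} (hg : IsENNLogConcave g) (hg_meas : Measurable g)
    [IsProbabilityMeasure (volume.withDensity g)] (h_id : MemLp id 2 (volume.withDensity g)) :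
    Real.exp (-Real.pi * ∫ y, ‖y‖ ^ 2 ∂(volume.withDensity g)) ≤
      (g (∫ y, y ∂(volume.withDensity g))).toReal := by
  have h_sq : Integrable (fun y : V ↦ -Real.pi * ‖y‖ ^ 2) (volume.withDensity g) :=
    h_id.integrable_norm_pow two_ne_zero |>.const_mul _
  rw [← integral_const_mul]
  simpa only [Real.log_exp] using hg.exp_integral_log_le hg_meas (h_id.integrable one_le_two)
    (p := fun y ↦ Real.exp (-Real.pi * ‖y‖ ^ 2)) (by fun_prop) (fun y ↦ Real.exp_pos _)
    lintegral_ofReal_exp_neg_pi_mul_sq_norm.le (by simpa only [Real.log_exp] using h_sq)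

end Barycenter

section Marginal

variable {E : Type*} [NormedAddCommGroup E] [InnerProductSpace ℝ E] [FiniteDimensional ℝ E]
  [MeasurableSpace E] [BorelSpace E] (H : Submodule ℝ E)

lemma measurePreserving_coprod_orthogonal_subtype :
    MeasurePreserving (Hᗮ.subtype.coprod H.subtype) (volume.prod volume) := by
  have h_swap := H.orthogonalDecomposition.symm.measurePreserving.comp
    ((WithLp.volume_preserving_toLp H Hᗮ).comp Measure.measurePreserving_swap)
  convert h_swap using 1
  funext p
  simp [add_comm]

lemma map_orthogonalProjectionOnto_withDensity {F : E → ℝ≥0∞} (hF : Measurable F) :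
    (volume.withDensity F).map Hᗮ.orthogonalProjectionOnto =
      volume.withDensity fun y : Hᗮ ↦ ∫⁻ x : H, F (y + x) := by
  have hP_meas : Measurable Hᗮ.orthogonalProjectionOnto := by fun_prop
  have hP (y : Hᗮ) (x : H) : Hᗮ.orthogonalProjectionOnto ((y : E) + x) = y := by
    have hx : Hᗮ.orthogonalProjectionOnto (x : E) = 0 :=
      Submodule.orthogonalProjectionOnto_eq_zero_iff.2 (H.le_orthogonal_orthogonal x.2)
    rw [map_add, Submodule.orthogonalProjectionOnto_mem_subspace_eq_self, hx, add_zero]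
  refine Measure.ext_of_lintegral _ fun φ hφ ↦ ?_
  calc ∫⁻ y, φ y ∂((volume.withDensity F).map Hᗮ.orthogonalProjectionOnto)
      = ∫⁻ z, F z * φ (Hᗮ.orthogonalProjectionOnto z) := by
        rw [lintegral_map hφ hP_meas,
          lintegral_withDensity_eq_lintegral_mul _ hF
            (g := fun z ↦ φ (Hᗮ.orthogonalProjectionOnto z)) (hφ.comp hP_meas)]
        rfl
    _ = ∫⁻ y : Hᗮ, ∫⁻ x : H, F (y + x) * φ (Hᗮ.orthogonalProjectionOnto ((y : E) + x)) := by
        rw [← (measurePreserving_coprod_orthogonal_subtype H).lintegral_comp (by fun_prop),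
          lintegral_prod _ (by fun_prop)]
        rfl
    _ = ∫⁻ y : Hᗮ, (∫⁻ x : H, F (y + x)) * φ y := by
        simp only [hP]
        exact lintegral_congr fun y ↦ lintegral_mul_const _ (by fun_prop)
    _ = ∫⁻ y, φ y ∂(volume.withDensity fun y : Hᗮ ↦ ∫⁻ x : H, F (y + x)) :=
        (lintegral_withDensity_eq_lintegral_mul _ (by fun_prop) hφ).symm

lemma IsENNLogConcave.lintegral_add_subspace {F : E → ℝ≥0∞} (hF : IsENNLogConcave F)
    (hF_meas : Measurable F) (K : Submodule ℝ E) :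
    IsENNLogConcave fun y : K ↦ ∫⁻ x : H, F (y + x) :=
  (hF.comp_linearMap (K.subtype.coprod H.subtype)).lintegral_prod_right
    (isPrekopaLeindler_of_isAddHaarMeasure volume) (by fun_prop)

theorem IsENNLogConcave.exp_neg_pi_mul_le_lintegral_section {F : E → ℝ≥0∞}
    (hF : IsENNLogConcave F) (hF_meas : Measurable F)
    [IsProbabilityMeasure (volume.withDensity F)] (h_id : MemLp id 2 (volume.withDensity F)) :
    Real.exp (-Real.pi * ∫ x, ‖Hᗮ.orthogonalProjectionOnto x‖ ^ 2 ∂(volume.withDensity F)) ≤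
      (∫⁻ x : H, F (Hᗮ.orthogonalProjectionOnto (∫ z, z ∂(volume.withDensity F)) + x)).toReal := by
  have hP_meas : Measurable Hᗮ.orthogonalProjectionOnto := by fun_prop
  have h_map := map_orthogonalProjectionOnto_withDensity H hF_meas
  have : IsProbabilityMeasure (volume.withDensity fun y : Hᗮ ↦ ∫⁻ x : H, F (y + x)) :=
    h_map ▸ Measure.isProbabilityMeasure_map hP_meas.aemeasurable
  have h_id_map : MemLp id 2 (volume.withDensity fun y : Hᗮ ↦ ∫⁻ x : H, F (y + x)) := by
    rw [← h_map, memLp_map_measure_iff (by fun_prop) hP_meas.aemeasurable]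
    exact Hᗮ.orthogonalProjectionOnto.comp_memLp' h_id
  have h_bound := (hF.lintegral_add_subspace H hF_meas Hᗮ).exp_neg_pi_mul_integral_sq_norm_le
    (by fun_prop) h_id_map
  rwa [← h_map, integral_map hP_meas.aemeasurable (by fun_prop),
    integral_map hP_meas.aemeasurable (by fun_prop),
    Hᗮ.orthogonalProjectionOnto.integral_comp_comm (φ := fun x ↦ x)
      (h_id.integrable one_le_two)] at h_bound

end Marginal

section Isotropic

lemma integral_sq_norm_orthogonalProjectionOnto {E : Type*} [NormedAddCommGroup E]
    [InnerProductSpace ℝ E] [CompleteSpace E] [MeasurableSpace E] [BorelSpace E] {μ : Measure E}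
    (h_id : MemLp id 2 μ) (h_cov : covarianceOperator μ = ContinuousLinearMap.id ℝ E)
    (K : Submodule ℝ E) [FiniteDimensional ℝ K] :
    ∫ x, ‖K.orthogonalProjectionOnto x‖ ^ 2 ∂μ = Module.finrank ℝ K := by
  let b := stdOrthonormalBasis ℝ K
  have h_norm (x : E) : ‖K.orthogonalProjectionOnto x‖ ^ 2 = ∑ i, inner ℝ (b i : E) x ^ 2 := by
    rw [← b.sum_sq_norm_inner_right]
    simp
  have h_coord (i) : ∫ x, inner ℝ (b i : E) x ^ 2 ∂μ = 1 := by
    simp only [sq, ← covarianceOperator_inner h_id]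
    rw [h_cov, ContinuousLinearMap.id_apply, real_inner_self_eq_norm_sq, ← Submodule.coe_norm,
      b.norm_eq_one, one_pow]
  have h_int (i) : Integrable (fun x ↦ inner ℝ (b i : E) x ^ 2) μ :=
    (h_id.const_inner (b i : E)).integrable_sq
  simp only [h_norm]
  rw [integral_finsetSum _ fun i _ ↦ h_int i]
  simp [h_coord]

variable {n : ℕ} {μ : Measure (Eucl n)}

lemma memLp_two_id_of_integral_mul_self_ne_zero (h : ∀ i, ∫ x, x i * x i ∂μ ≠ 0) :
    MemLp id 2 μ :=
  memLp_piLp_iff.2 fun i ↦ (memLp_two_iff_integrable_sq (by fun_prop)).2 <| by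
    simpa only [sq, id_eq] using Integrable.of_integral_ne_zero (h i)

lemma covarianceOperator_eq_id (h_id : MemLp id 2 μ)
    (h_cov : ∀ i j, ∫ x, x i * x j ∂μ = if i = j then 1 else 0) :
    covarianceOperator μ = ContinuousLinearMap.id ℝ (Eucl n) := by
  refine ContinuousLinearMap.coe_injective <|
    (EuclideanSpace.basisFun (Fin n) ℝ).toBasis.ext fun i ↦ ?_
  ext j
  simp only [OrthonormalBasis.coe_toBasis, ContinuousLinearMap.coe_coe,
    ContinuousLinearMap.id_apply]
  rw [← EuclideanSpace.inner_basisFun_real, ← EuclideanSpace.inner_basisFun_real,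
    covarianceOperator_inner h_id, OrthonormalBasis.inner_eq_ite, ← h_cov]
  simp only [EuclideanSpace.basisFun_inner]

end Isotropic

section RealDensity

variable {α : Type*} [MeasurableSpace α] {μ : Measure α} {f : α → ℝ}

lemma integral_withDensity_ofReal (hf : Measurable f) (hf_nonneg : ∀ x, 0 ≤ f x) (u : α → ℝ) :
    ∫ x, u x ∂(μ.withDensity fun x ↦ ENNReal.ofReal (f x)) = ∫ x, f x * u x ∂μ := by
  rw [integral_withDensity_eq_integral_toReal_smul (by fun_prop)
    (.of_forall fun x ↦ ENNReal.ofReal_lt_top)]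
  simp only [ENNReal.toReal_ofReal (hf_nonneg _), smul_eq_mul]

lemma isProbabilityMeasure_withDensity_ofReal (hf_nonneg : ∀ x, 0 ≤ f x)
    (h_mass : ∫ x, f x ∂μ = 1) :
    IsProbabilityMeasure (μ.withDensity fun x ↦ ENNReal.ofReal (f x)) := by
  have hf : Integrable f μ := .of_integral_ne_zero (h_mass ▸ one_ne_zero)
  constructor
  rw [withDensity_apply _ MeasurableSet.univ, setLIntegral_univ,
    ← ofReal_integral_eq_lintegral_ofReal hf (.of_forall hf_nonneg), h_mass, ENNReal.ofReal_one]

end RealDensity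

lemma sectL1_eq_toReal_lintegral {n : ℕ} {f : Eucl n → ℝ} (hf_nonneg : ∀ x, 0 ≤ f x)
    (hf_meas : Measurable f) (H : Submodule ℝ (Eucl n)) :
    sectL1 f H = (∫⁻ x : H, ENNReal.ofReal (f x)).toReal :=
  integral_eq_lintegral_of_nonneg_ae (.of_forall fun x ↦ hf_nonneg x)
    (hf_meas.comp measurable_subtype_coe).aestronglyMeasurable

theorem section_integral_lower_bound_general {n : ℕ} {f : Eucl n → ℝ} (hf_nonneg : ∀ x, 0 ≤ f x)
    (hf : IsLogConcave f) (hf_meas : Measurable f) (h_mass : ∫ x, f x = 1)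
    (h_mean : ∀ i, ∫ x, f x * x i = 0)
    (h_cov : ∀ i j, ∫ x, f x * x i * x j = if i = j then 1 else 0) (H : Submodule ℝ (Eucl n)) :
    Real.exp (-Real.pi) ^ (n - Module.finrank ℝ H) ≤ sectL1 f H := by
  set μ : Measure (Eucl n) := volume.withDensity fun x ↦ ENNReal.ofReal (f x)
  have hμ_prob : IsProbabilityMeasure μ := isProbabilityMeasure_withDensity_ofReal hf_nonneg h_mass
  have hμ_integral (u : Eucl n → ℝ) : ∫ x, u x ∂μ = ∫ x, f x * u x :=
    integral_withDensity_ofReal hf_meas hf_nonneg u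
  have hμ_cov (i j) : ∫ x, x i * x j ∂μ = if i = j then 1 else 0 := by
    simpa only [hμ_integral, mul_assoc] using h_cov i j
  have h_id : MemLp id 2 μ := memLp_two_id_of_integral_mul_self_ne_zero fun i ↦ by simp [hμ_cov]
  have hμ_mean : ∫ x, x ∂μ = 0 := by
    ext i
    rw [eval_integral_piLp (f := fun x ↦ x) fun i ↦
      (memLp_piLp_iff.1 h_id i).integrable one_le_two, hμ_integral, h_mean, PiLp.zero_apply]
  have h_codim : Module.finrank ℝ Hᗮ = n - Module.finrank ℝ H :=
    Nat.eq_sub_of_add_eq' (H.finrank_add_finrank_orthogonal.trans finrank_euclideanSpace_fin)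
  calc Real.exp (-Real.pi) ^ (n - Module.finrank ℝ H)
      = Real.exp (-Real.pi * ∫ x, ‖Hᗮ.orthogonalProjectionOnto x‖ ^ 2 ∂μ) := by
        rw [integral_sq_norm_orthogonalProjectionOnto h_id (covarianceOperator_eq_id h_id hμ_cov),
          h_codim, ← Real.exp_nat_mul, mul_comm]
    _ ≤ (∫⁻ x : H, ENNReal.ofReal
          (f (Hᗮ.orthogonalProjectionOnto (∫ z, z ∂μ) + x))).toReal :=
        (hf.isENNLogConcave_ofReal hf_nonneg).exp_neg_pi_mul_le_lintegral_section H
          (by fun_prop) h_id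
    _ = sectL1 f H := by
        simp only [hμ_mean, map_zero, ZeroMemClass.coe_zero, zero_add,
          sectL1_eq_toReal_lintegral hf_nonneg hf_meas]

/-- **Lemma 5.3, lower bound**: there is an absolute constant `C > 0` such that
every log-concave upper semicontinuous probability density in isotropic position
satisfies `∫_H f dλ_H ≥ C^{n−k}` for every `k`-dimensional subspace `H`. -/
theorem section_integral_lower_bound :
    ∃ C : ℝ, 0 < C ∧ ∀ (n k : ℕ), 1 ≤ k → k < n →
      ∀ f : Eucl n → ℝ, (∀ x, 0 ≤ f x) → IsLogConcave f →
        UpperSemicontinuous f → Integrable f → (∫ x, f x) = 1 →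
        (∀ i : Fin n, (∫ x, f x * x i) = 0) →
        (∀ i j : Fin n, (∫ x, f x * x i * x j) = if i = j then 1 else 0) →
        ∀ H : Submodule ℝ (Eucl n), Module.finrank ℝ H = k →
          C ^ (n - k) ≤ sectL1 f H :=
  ⟨Real.exp (-Real.pi), Real.exp_pos _,
    fun _ _ _ _ _ hf_nonneg hf hf_usc _ h_mass h_mean h_cov H hH ↦ hH ▸
      section_integral_lower_bound_general hf_nonneg hf hf_usc.measurable h_mass h_mean h_cov H⟩
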